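/- Let n ≥ 2, −∞ < μ < 1/4 and let γ ∈ (−(n−2+α₊), α₊). Then there exist a constant c > 0 and a positive function H_γ ∈ C²(ℝⁿ₊) which is L_μ-harmonic on ℝⁿ₊ (i.e. ΔH_γ + (μ/x₁²)H_γ = 0), axially symmetric (H_γ(x) depends only on x₁ and |x|), homogeneous of degree γ (H_γ(λx) = λ^γ H_γ(x) for all λ > 0), and satisfies c⁻¹ x₁^{α₋} |x|^{γ−α₋} ≤ H_γ(x) ≤ c x₁^{α₋} |x|^{γ−α₋} for all x ∈ ℝⁿ₊. -/

import Mathlib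

open Real Set

noncomputable def lap {n : ℕ} (u : EuclideanSpace ℝ (Fin n) → ℝ)
    (x : EuclideanSpace ℝ (Fin n)) : ℝ :=
  ∑ i : Fin n, iteratedFDeriv ℝ 2 u x ![EuclideanSpace.single i 1, EuclideanSpace.single i 1]

noncomputable def x1 {n : ℕ} (x : EuclideanSpace ℝ (Fin n)) : ℝ :=
  if h : 0 < n then x ⟨0, h⟩ else 0

def halfSpace (n : ℕ) : Set (EuclideanSpace ℝ (Fin n)) := {x | 0 < x1 x}

noncomputable def aPlus (μ : ℝ) : ℝ := 1 / 2 + Real.sqrt (1 / 4 - μ)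

noncomputable def aMinus (μ : ℝ) : ℝ := 1 / 2 - Real.sqrt (1 / 4 - μ)

noncomputable def Lam (n : ℕ) (s : ℝ) : ℝ := s * (s + n - 2)

open Filter Topology FormalMultilinearSeries InnerProductSpace Laplacian Gradient Module
open scoped ContDiff

/-!
Separating variables, `x₁ ^ α₊ * |x| ^ (γ - α₊) * F (1 - x₁² / |x|²)` is `L_μ`-harmonic as soon as
`F` solves the hypergeometric equation with parameters `a = (α₊ - γ) / 2`,
`b = (α₊ + γ + n - 2) / 2` and `c = (n - 1) / 2`, and `a`, `b` are both positive exactly when `γ`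
lies in the given interval. Then `F = ₂F₁ a b c` has positive coefficients, and by Euler's limit
formula for the Gamma function they are comparable to those of the binomial series
`(1 - s) ^ (c - a - b)`. Since `c - a - b = 1 / 2 - α₊`, the factor `F` is comparable to
`(x₁ / |x|) ^ (1 - 2 * α₊)`, which turns the exponent `α₊` of `x₁` into `1 - α₊ = α₋`.
-/

lemma ascPochhammer_eval_eq_prod_range {R : Type*} [CommSemiring R] (n : ℕ) (r : R) :
    (ascPochhammer R n).eval r = ∏ j ∈ Finset.range n, (r + j) := by
  induction n with
  | zero => simp
  | succ n ih => rw [ascPochhammer_succ_eval, ih, Finset.prod_range_succ]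

lemma tendsto_ascPochhammer_mul_div_mul {a b c d : ℝ} (ha : 0 < a) (hb : 0 < b) (hc : 0 < c)
    (hd : 0 < d) (h : a + b = c + d) :
    Tendsto (fun n : ℕ ↦ (ascPochhammer ℝ n).eval a * (ascPochhammer ℝ n).eval b /
      ((ascPochhammer ℝ n).eval c * (ascPochhammer ℝ n).eval d)) atTop
      (𝓝 (Gamma c * Gamma d / (Gamma a * Gamma b))) := by
  rw [← tendsto_add_atTop_iff_nat 1]
  refine (((GammaSeq_tendsto_Gamma c).mul (GammaSeq_tendsto_Gamma d)).div
    ((GammaSeq_tendsto_Gamma a).mul (GammaSeq_tendsto_Gamma b))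
    (mul_pos (Gamma_pos_of_pos ha) (Gamma_pos_of_pos hb)).ne').congr' ?_
  filter_upwards [eventually_gt_atTop 0] with n hn
  have hn : (0 : ℝ) < n := by exact_mod_cast hn
  have hpow : (n : ℝ) ^ a * n ^ b = n ^ c * n ^ d := by rw [← rpow_add hn, ← rpow_add hn, h]
  simp only [GammaSeq, ← ascPochhammer_eval_eq_prod_range]
  have pos (s : ℝ) (hs : 0 < s) := ascPochhammer_pos (n + 1) s hs
  have := pos a ha
  have := pos b hb
  have := pos c hc
  have := pos d hd
  simp only [Pi.div_apply]
  field_simp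
  linear_combination -hpow

lemma exists_ascPochhammer_mul_le {a b c d : ℝ} (ha : 0 < a) (hb : 0 < b) (hc : 0 < c)
    (hd : 0 < d) (h : a + b = c + d) :
    ∃ K > 0, ∀ n : ℕ, (ascPochhammer ℝ n).eval a * (ascPochhammer ℝ n).eval b ≤
      K * ((ascPochhammer ℝ n).eval c * (ascPochhammer ℝ n).eval d) := by
  obtain ⟨K, hK⟩ := (tendsto_ascPochhammer_mul_div_mul ha hb hc hd h).bddAbove_range
  have hle (n : ℕ) := hK (mem_range_self n)
  refine ⟨K, one_pos.trans_le (by simpa using hle 0), fun n ↦ ?_⟩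
  exact (div_le_iff₀ (mul_pos (ascPochhammer_pos n c hc) (ascPochhammer_pos n d hd))).mp (hle n)

lemma hasSum_mul_pow_of_succ {R : Type*} [CommRing R] [TopologicalSpace R]
    [IsTopologicalRing R] {v : ℕ → R} {s S : R} (h0 : v 0 = 0)
    (h : HasSum (fun n ↦ v (n + 1) * s ^ n) S) :
    HasSum (fun n ↦ v n * s ^ n) (s * S) := by
  rw [← hasSum_nat_add_iff' 1]
  simpa [h0, pow_succ, mul_comm, mul_left_comm, mul_assoc] using h.mul_left s

section PowerSeries

variable {𝕜 : Type*} [NontriviallyNormedField 𝕜] {f : 𝕜 → 𝕜} {p : ℕ → 𝕜}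

lemma hasSum_of_hasFPowerSeriesOnBall_ofScalars
    (h : HasFPowerSeriesOnBall f (ofScalars 𝕜 p) 0 1) {s : 𝕜} (hs : ‖s‖ < 1) :
    HasSum (fun n ↦ p n * s ^ n) (f s) := by
  have := h.hasSum (y := s) (by simpa [enorm_eq_nnnorm] using! hs)
  simpa [ofScalars_apply_eq, -apply_eq_prod_smul_coeff] using this

lemma hasFPowerSeriesOnBall_ofScalars_deriv [CompleteSpace 𝕜] {x : 𝕜} {r : ENNReal}
    (h : HasFPowerSeriesOnBall f (ofScalars 𝕜 p) x r) :
    HasFPowerSeriesOnBall (deriv f) (ofScalars 𝕜 fun n ↦ (n + 1) * p (n + 1)) x r := by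
  convert! (ContinuousLinearMap.apply 𝕜 𝕜 (1 : 𝕜)).comp_hasFPowerSeriesOnBall h.fderiv using 1
  ext n
  change (ofScalars 𝕜 fun n ↦ (n + 1) * p (n + 1)).coeff n = (ofScalars 𝕜 p).derivSeries.coeff n 1
  simp

end PowerSeries

section Hypergeometric

variable {𝕜 : Type*} [RCLike 𝕜]

lemma one_le_radius_ordinaryHypergeometricSeries (a b c : 𝕜) :
    1 ≤ (ordinaryHypergeometricSeries 𝕜 a b c).radius := by
  by_cases h : ∀ k : ℕ, (k : 𝕜) ≠ -a ∧ (k : 𝕜) ≠ -b ∧ (k : 𝕜) ≠ -c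
  · exact (ordinaryHypergeometricSeries_radius_eq_one 𝕜 a b c h).ge
  obtain ⟨k, rfl | rfl | rfl⟩ : ∃ k : ℕ, a = -k ∨ b = -k ∨ c = -k := by
    contrapose! h
    simpa only [ne_eq, eq_neg_iff_add_eq_zero, add_comm] using h
  · exact ordinaryHypergeometric_radius_top_of_neg_nat₁ (𝔸 := 𝕜) b c ▸ le_top
  · exact ordinaryHypergeometric_radius_top_of_neg_nat₂ (𝔸 := 𝕜) a c ▸ le_top
  · exact ordinaryHypergeometric_radius_top_of_neg_nat₃ (𝔸 := 𝕜) a b ▸ le_top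

lemma hasFPowerSeriesOnBall_ordinaryHypergeometric (a b c : 𝕜) :
    HasFPowerSeriesOnBall (₂F₁ a b c : 𝕜 → 𝕜) (ordinaryHypergeometricSeries 𝕜 a b c) 0 1 :=
  have h := one_le_radius_ordinaryHypergeometricSeries a b c
  ((ordinaryHypergeometricSeries 𝕜 a b c).hasFPowerSeriesOnBall
    (one_pos.trans_le h)).mono one_pos h

lemma analyticOnNhd_ordinaryHypergeometric (a b c : 𝕜) :
    AnalyticOnNhd 𝕜 (₂F₁ a b c : 𝕜 → 𝕜) (Metric.ball 0 1) := by
  have := (hasFPowerSeriesOnBall_ordinaryHypergeometric a b c).analyticOnNhd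
  rwa [← ENNReal.ofReal_one, Metric.eball_ofReal] at this

lemma hasSum_ordinaryHypergeometric (a b c : 𝕜) {s : 𝕜} (hs : ‖s‖ < 1) :
    HasSum (fun n ↦ ordinaryHypergeometricCoefficient a b c n * s ^ n) (₂F₁ a b c s) :=
  hasSum_of_hasFPowerSeriesOnBall_ofScalars (hasFPowerSeriesOnBall_ordinaryHypergeometric a b c) hs

lemma ordinaryHypergeometricCoefficient_succ {a b c : 𝕜} {n : ℕ} (h : c + n ≠ 0) :
    (n + 1) * (c + n) * ordinaryHypergeometricCoefficient a b c (n + 1) =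
      (a + n) * (b + n) * ordinaryHypergeometricCoefficient a b c n := by
  have hn : (n : 𝕜) + 1 ≠ 0 := by exact_mod_cast n.succ_ne_zero
  simp only [ordinaryHypergeometricCoefficient, ascPochhammer_succ_eval, Nat.factorial_succ,
    Nat.cast_mul, Nat.cast_succ, mul_inv]
  field_simp

theorem ordinaryHypergeometric_ode {a b c : 𝕜} (hc : ∀ n : ℕ, c + n ≠ 0) {s : 𝕜}
    (hs : ‖s‖ < 1) :
    s * (1 - s) * deriv (deriv (₂F₁ a b c)) s + (c - (a + b + 1) * s) * deriv (₂F₁ a b c) s =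
      a * b * ₂F₁ a b c s := by
  let A := ordinaryHypergeometricCoefficient a b c
  have h0 := hasFPowerSeriesOnBall_ordinaryHypergeometric a b c
  have h1 := hasFPowerSeriesOnBall_ofScalars_deriv h0
  have h2 := hasFPowerSeriesOnBall_ofScalars_deriv h1
  have sum0 : HasSum (fun n ↦ A n * s ^ n) (₂F₁ a b c s) := hasSum_ordinaryHypergeometric a b c hs
  have sum1 : HasSum (fun n ↦ (n + 1) * A (n + 1) * s ^ n) (deriv (₂F₁ a b c) s) :=
    hasSum_of_hasFPowerSeriesOnBall_ofScalars h1 hs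
  have sum2 := hasSum_of_hasFPowerSeriesOnBall_ofScalars h2 hs
  have sum_mul1 : HasSum (fun n ↦ n * A n * s ^ n) (s * deriv (₂F₁ a b c) s) :=
    hasSum_mul_pow_of_succ (v := fun n ↦ n * A n) (by simp) (by exact_mod_cast sum1)
  have sum_mul2 : HasSum (fun n ↦ n * ((n + 1) * A (n + 1)) * s ^ n)
      (s * deriv (deriv (₂F₁ a b c)) s) :=
    hasSum_mul_pow_of_succ (v := fun n ↦ n * ((n + 1) * A (n + 1))) (by simp)
      (by exact_mod_cast sum2)
  have sum_sq_mul2 : HasSum (fun n ↦ n * (n - 1) * A n * s ^ n)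
      (s * (s * deriv (deriv (₂F₁ a b c)) s)) :=
    hasSum_mul_pow_of_succ (v := fun n ↦ n * (n - 1) * A n) (by simp)
      (by convert! sum_mul2 using 2; push_cast; ring)
  have total := (((sum_mul2.sub sum_sq_mul2).add (sum1.mul_left c)).sub
    (sum_mul1.mul_left (a + b + 1))).sub (sum0.mul_left (a * b))
  have vanish : ∀ n : ℕ, n * ((n + 1) * A (n + 1)) * s ^ n - n * (n - 1) * A n * s ^ n +
      c * ((n + 1) * A (n + 1) * s ^ n) - (a + b + 1) * (n * A n * s ^ n) -
      a * b * (A n * s ^ n) = 0 := fun n ↦ by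
    linear_combination s ^ n * ordinaryHypergeometricCoefficient_succ (a := a) (b := b) (hc n)
  simp only [vanish] at total
  have zero := total.unique hasSum_zero
  linear_combination zero

end Hypergeometric

lemma ordinaryHypergeometric_eq_one_sub_rpow {a c s : ℝ} (hc : ∀ n : ℕ, c + n ≠ 0)
    (hs : |s| < 1) : ₂F₁ a c c s = (1 - s) ^ (-a) := by
  have h := (one_add_rpow_hasFPowerSeriesOnBall_zero (a := -a)).hasSum (y := -s)
    (by simpa [enorm_eq_nnnorm] using! hs)
  rw [binomialSeries_eq_ordinaryHypergeometricSeries (b := c)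
    fun k hk ↦ hc k (by rw [hk, add_neg_cancel])] at h
  refine (hasSum_ordinaryHypergeometric a c c (by simpa using hs)).unique ?_
  simpa [-apply_eq_prod_smul_coeff, sub_eq_add_neg, ordinaryHypergeometricSeries,
    ofScalars_apply_eq, compContinuousLinearMap_apply, Function.comp_def] using! h

lemma exists_ordinaryHypergeometric_le {a b a' b' c : ℝ} (ha : 0 < a) (hb : 0 < b)
    (ha' : 0 < a') (hb' : 0 < b') (hc : 0 < c) (h : a + b = a' + b') :
    ∃ K > 0, ∀ s ∈ Ico (0 : ℝ) 1, ₂F₁ a b c s ≤ K * ₂F₁ a' b' c s := by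
  obtain ⟨K, hK, hle⟩ := exists_ascPochhammer_mul_le ha hb ha' hb' h
  refine ⟨K, hK, fun s hs ↦ ?_⟩
  have hs1 : ‖s‖ < 1 := by rw [norm_of_nonneg hs.1]; exact hs.2
  refine hasSum_le (fun n ↦ ?_) (hasSum_ordinaryHypergeometric a b c hs1)
    ((hasSum_ordinaryHypergeometric a' b' c hs1).mul_left K)
  have hw : 0 ≤ (n.factorial : ℝ)⁻¹ * ((ascPochhammer ℝ n).eval c)⁻¹ * s ^ n := by
    have := ascPochhammer_pos n c hc
    have := hs.1
    positivity
  linear_combination mul_le_mul_of_nonneg_left (hle n) hw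

theorem exists_ordinaryHypergeometric_bounds {a b c : ℝ} (ha : 0 < a) (hb : 0 < b) (hc : 0 < c)
    (h : c < a + b) :
    ∃ K > 0, ∀ s ∈ Ico (0 : ℝ) 1,
      K⁻¹ * (1 - s) ^ (c - a - b) ≤ ₂F₁ a b c s ∧ ₂F₁ a b c s ≤ K * (1 - s) ^ (c - a - b) := by
  have hσ : 0 < a + b - c := sub_pos.mpr h
  obtain ⟨K₁, hK₁, hle₁⟩ := exists_ordinaryHypergeometric_le ha hb hσ hc hc (by ring)
  obtain ⟨K₂, hK₂, hle₂⟩ := exists_ordinaryHypergeometric_le hσ hc ha hb hc (by ring)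
  refine ⟨max K₁ K₂, lt_max_of_lt_left hK₁, fun s hs ↦ ?_⟩
  have hbinom : (1 - s) ^ (c - a - b) = ₂F₁ (a + b - c) c c s := by
    rw [ordinaryHypergeometric_eq_one_sub_rpow (fun n ↦ by positivity)
      (abs_lt.mpr ⟨by linarith [hs.1], hs.2⟩)]
    ring_nf
  have hpow : 0 < (1 - s) ^ (c - a - b) := rpow_pos_of_pos (sub_pos.mpr hs.2) _
  have lower := hle₂ s hs
  have upper := hle₁ s hs
  rw [← hbinom] at lower upper
  have hF : 0 < ₂F₁ a b c s := pos_of_mul_pos_right (hpow.trans_le lower) hK₂.le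
  constructor
  · rw [inv_mul_le_iff₀ (lt_max_of_lt_left hK₁)]
    exact lower.trans (by gcongr; exact le_max_right _ _)
  · exact upper.trans (by gcongr; exact le_max_left _ _)

lemma norm_rpow_eq_norm_sq_rpow {V : Type*} [NormedAddCommGroup V] (v : V) (b : ℝ) :
    ‖v‖ ^ b = (‖v‖ ^ 2) ^ (b / 2) := by
  rw [← rpow_natCast_mul (norm_nonneg v)]
  congr 1
  ring

section Laplacian

variable {E : Type*} [NormedAddCommGroup E] [InnerProductSpace ℝ E] {f g : E → ℝ} {e x : E}

lemma contDiffAt_inner_rpow {n : WithTop ℕ∞} (a : ℝ) (hT : ⟪e, x⟫_ℝ ≠ 0) :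
    ContDiffAt ℝ n (fun y ↦ ⟪e, y⟫_ℝ ^ a) x :=
  (contDiffAt_const.inner ℝ contDiffAt_id).rpow_const_of_ne hT

lemma contDiffAt_norm_rpow {n : WithTop ℕ∞} (b : ℝ) (hx : x ≠ 0) :
    ContDiffAt ℝ n (fun y ↦ ‖y‖ ^ b) x :=
  (contDiffAt_norm ℝ hx).rpow_const_of_ne (norm_ne_zero_iff.mpr hx)

section Gradient

variable [CompleteSpace E]

lemma hasGradientAt_mul {f' g' : E} (hf : HasGradientAt f f' x) (hg : HasGradientAt g g' x) :
    HasGradientAt (fun y ↦ f y * g y) (f x • g' + g x • f') x := by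
  rw [hasGradientAt_iff_hasFDerivAt] at *
  simpa using! hf.mul hg

lemma hasGradientAt_comp {φ : ℝ → ℝ} {φ' : ℝ} {f' : E} (hφ : HasDerivAt φ φ' (f x))
    (hf : HasGradientAt f f' x) : HasGradientAt (fun y ↦ φ (f y)) (φ' • f') x := by
  rw [hasGradientAt_iff_hasFDerivAt] at *
  simpa using! hφ.comp_hasFDerivAt x hf

lemma hasGradientAt_inner_right (e x : E) : HasGradientAt (fun y ↦ ⟪e, y⟫_ℝ) e x := by
  rw [hasGradientAt_iff_hasFDerivAt]
  exact (toDual ℝ E e).hasFDerivAt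

lemma hasGradientAt_norm_sq (x : E) : HasGradientAt (fun y : E ↦ ‖y‖ ^ 2) ((2 : ℝ) • x) x := by
  rw [hasGradientAt_iff_hasFDerivAt]
  convert! (hasStrictFDerivAt_norm_sq x).hasFDerivAt using 1
  ext y
  simp [two_mul]

lemma hasGradientAt_inner_rpow (a : ℝ) (hT : ⟪e, x⟫_ℝ ≠ 0) :
    HasGradientAt (fun y ↦ ⟪e, y⟫_ℝ ^ a) ((a * ⟪e, x⟫_ℝ ^ (a - 1)) • e) x :=
  hasGradientAt_comp (hasDerivAt_rpow_const (.inl hT)) (hasGradientAt_inner_right e x)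

lemma hasGradientAt_norm_rpow (b : ℝ) (hx : x ≠ 0) :
    HasGradientAt (fun y : E ↦ ‖y‖ ^ b) ((b * ‖x‖ ^ (b - 2)) • x) x := by
  simp only [norm_rpow_eq_norm_sq_rpow]
  convert! hasGradientAt_comp (hasDerivAt_rpow_const (.inl (by simpa using hx)))
    (hasGradientAt_norm_sq x) using 1
  rw [smul_smul]
  ring_nf

end Gradient

variable [FiniteDimensional ℝ E]

lemma laplacian_eq_sum_fderiv_fderiv {ι : Type*} [Fintype ι] (b : OrthonormalBasis ι ℝ E) :
    Δ f x = ∑ i, fderiv ℝ (fderiv ℝ f) x (b i) (b i) := by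
  simp [laplacian_eq_iteratedFDeriv_orthonormalBasis f b, iteratedFDeriv_two_apply]

lemma inner_gradient_gradient_eq_sum {ι : Type*} [Fintype ι] (b : OrthonormalBasis ι ℝ E) :
    ⟪∇ f x, ∇ g x⟫_ℝ = ∑ i, fderiv ℝ f x (b i) * fderiv ℝ g x (b i) := by
  rw [← b.sum_inner_mul_inner]
  simp only [inner_gradient_left, inner_gradient_right, conj_trivial]

lemma laplacian_mul (hf : ContDiffAt ℝ 2 f x) (hg : ContDiffAt ℝ 2 g x) :
    Δ (fun y ↦ f y * g y) x = f x * Δ g x + 2 * ⟪∇ f x, ∇ g x⟫_ℝ + g x * Δ f x := by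
  have hfderiv : fderiv ℝ (fun y ↦ f y * g y) =ᶠ[𝓝 x]
      fun y ↦ f y • fderiv ℝ g y + g y • fderiv ℝ f y := by
    filter_upwards [hf.eventually (by simp), hg.eventually (by simp)] with y hfy hgy
    exact fderiv_fun_mul (hfy.differentiableAt two_ne_zero) (hgy.differentiableAt two_ne_zero)
  have hf' := (hf.differentiableAt two_ne_zero).hasFDerivAt
  have hg' := (hg.differentiableAt two_ne_zero).hasFDerivAt
  have hf'' := ((hf.fderiv_right (m := 1) le_rfl).differentiableAt one_ne_zero).hasFDerivAt
  have hg'' := ((hg.fderiv_right (m := 1) le_rfl).differentiableAt one_ne_zero).hasFDerivAt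
  have hsecond := ((hf'.smul hg'').add (hg'.smul hf'')).congr_of_eventuallyEq hfderiv
  let b := stdOrthonormalBasis ℝ E
  simp only [laplacian_eq_sum_fderiv_fderiv b, inner_gradient_gradient_eq_sum b, hsecond.fderiv,
    Finset.mul_sum, ← Finset.sum_add_distrib]
  refine Finset.sum_congr rfl fun i _ ↦ ?_
  simp only [_root_.add_apply, _root_.smul_apply, ContinuousLinearMap.smulRight_apply, smul_eq_mul]
  ring

lemma laplacian_comp {φ : ℝ → ℝ} (hφ : ContDiffAt ℝ 2 φ (f x)) (hf : ContDiffAt ℝ 2 f x) :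
    Δ (fun y ↦ φ (f y)) x = deriv (deriv φ) (f x) * ‖∇ f x‖ ^ 2 + deriv φ (f x) * Δ f x := by
  have hfderiv : fderiv ℝ (fun y ↦ φ (f y)) =ᶠ[𝓝 x]
      fun y ↦ deriv φ (f y) • fderiv ℝ f y := by
    filter_upwards [hf.continuousAt.eventually (hφ.eventually (by simp)),
      hf.eventually (by simp)] with y hφy hfy
    exact ((hφy.differentiableAt two_ne_zero).hasDerivAt.comp_hasFDerivAt y
      (hfy.differentiableAt two_ne_zero).hasFDerivAt).fderiv
  have hf' := (hf.differentiableAt two_ne_zero).hasFDerivAt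
  have hf'' := ((hf.fderiv_right (m := 1) le_rfl).differentiableAt one_ne_zero).hasFDerivAt
  have hφ'' : HasDerivAt (deriv φ) (deriv (deriv φ) (f x)) (f x) :=
    ((hφ.derivWithin (m := 1) le_rfl).differentiableAt one_ne_zero).hasDerivAt
  have hsecond := ((hφ''.comp_hasFDerivAt x hf').smul hf'').congr_of_eventuallyEq hfderiv
  let b := stdOrthonormalBasis ℝ E
  simp only [laplacian_eq_sum_fderiv_fderiv b, ← real_inner_self_eq_norm_sq,
    inner_gradient_gradient_eq_sum b, hsecond.fderiv, Finset.mul_sum, ← Finset.sum_add_distrib]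
  refine Finset.sum_congr rfl fun i _ ↦ ?_
  simp only [Function.comp_apply, _root_.add_apply, _root_.smul_apply,
    ContinuousLinearMap.smulRight_apply, smul_eq_mul]
  ring

lemma laplacian_inner_right (e x : E) : Δ (fun y ↦ ⟪e, y⟫_ℝ) x = 0 := by
  have : fderiv ℝ (fun y ↦ ⟪e, y⟫_ℝ) = fun _ ↦ toDual ℝ E e :=
    funext fun y ↦ (toDual ℝ E e).hasFDerivAt.fderiv
  simp [laplacian_eq_sum_fderiv_fderiv (stdOrthonormalBasis ℝ E), this]

lemma laplacian_norm_sq (x : E) : Δ (fun y : E ↦ ‖y‖ ^ 2) x = 2 * finrank ℝ E := by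
  have hfderiv : fderiv ℝ (fun y : E ↦ ‖y‖ ^ 2) = fun y ↦ (2 : ℝ) • innerSL ℝ y :=
    funext fun y ↦ by rw [(hasStrictFDerivAt_norm_sq y).hasFDerivAt.fderiv, two_nsmul, two_smul]
  have hsecond : HasFDerivAt (fun y : E ↦ (2 : ℝ) • innerSL ℝ y) ((2 : ℝ) • innerSL ℝ) x :=
    (innerSL ℝ).hasFDerivAt.fun_const_smul (2 : ℝ)
  have unit (i) : innerSL ℝ (stdOrthonormalBasis ℝ E i) (stdOrthonormalBasis ℝ E i) = (1 : ℝ) := by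
    simp [innerSL_apply_apply]
  simp [laplacian_eq_sum_fderiv_fderiv (stdOrthonormalBasis ℝ E), hfderiv, hsecond.fderiv, unit,
    mul_comm]

lemma laplacian_inner_rpow (a : ℝ) (hT : ⟪e, x⟫_ℝ ≠ 0) :
    Δ (fun y ↦ ⟪e, y⟫_ℝ ^ a) x = a * (a - 1) * ⟪e, x⟫_ℝ ^ (a - 2) * ‖e‖ ^ 2 := by
  rw [laplacian_comp (φ := fun t ↦ t ^ a) (contDiffAt_rpow_const_of_ne hT)
    (contDiff_const.inner ℝ contDiff_id).contDiffAt, laplacian_inner_right,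
    (hasGradientAt_inner_right e x).gradient]
  simp only [deriv_rpow_const', deriv_const_mul_field', Real.deriv_rpow_const]
  ring_nf

lemma laplacian_norm_rpow (b : ℝ) (hx : x ≠ 0) :
    Δ (fun y : E ↦ ‖y‖ ^ b) x = b * (b + finrank ℝ E - 2) * ‖x‖ ^ (b - 2) := by
  have hW : ‖x‖ ^ 2 ≠ 0 := by simpa using hx
  have hexp : (b - 2) / 2 = b / 2 - 1 := by ring
  simp only [norm_rpow_eq_norm_sq_rpow]
  rw [laplacian_comp (φ := fun t ↦ t ^ (b / 2)) (f := fun y : E ↦ ‖y‖ ^ 2)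
    (contDiffAt_rpow_const_of_ne hW) (contDiff_norm_sq ℝ).contDiffAt, laplacian_norm_sq,
    (hasGradientAt_norm_sq x).gradient]
  simp only [deriv_rpow_const', deriv_const_mul_field', Real.deriv_rpow_const, norm_smul,
    norm_ofNat, mul_pow, hexp, rpow_sub_one hW]
  field_simp
  ring

end Laplacian

/-- The open half-space with inner normal `e`. -/
def openHalfSpace {E : Type*} [NormedAddCommGroup E] [InnerProductSpace ℝ E] (e : E) : Set E :=
  {x | 0 < ⟪e, x⟫_ℝ}

/-- The axially symmetric monomial `x₁ ^ a * |x| ^ b`, with `x₁ = ⟪e, x⟫`. -/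
noncomputable def axialMonomial {E : Type*} [NormedAddCommGroup E] [InnerProductSpace ℝ E]
    (e : E) (a b : ℝ) (x : E) : ℝ :=
  ⟪e, x⟫_ℝ ^ a * ‖x‖ ^ b

section AxialMonomial

variable {E : Type*} [NormedAddCommGroup E] [InnerProductSpace ℝ E] {e x : E} (a b : ℝ)

lemma norm_pos_of_mem_openHalfSpace (hx : x ∈ openHalfSpace e) : 0 < ‖x‖ := by
  rw [norm_pos_iff]
  rintro rfl
  simp [openHalfSpace] at hx

lemma isOpen_openHalfSpace (e : E) : IsOpen (openHalfSpace e) :=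
  isOpen_lt continuous_const (by fun_prop)

lemma axialMonomial_pos (hx : x ∈ openHalfSpace e) : 0 < axialMonomial e a b x :=
  mul_pos (rpow_pos_of_pos hx _) (rpow_pos_of_pos (norm_pos_of_mem_openHalfSpace hx) _)

lemma axialMonomial_mul (hx : x ∈ openHalfSpace e) (a' b' : ℝ) :
    axialMonomial e a b x * axialMonomial e a' b' x = axialMonomial e (a + a') (b + b') x := by
  simp only [axialMonomial, rpow_add hx, rpow_add (norm_pos_of_mem_openHalfSpace hx)]
  ring

lemma axialMonomial_rpow (hx : x ∈ openHalfSpace e) (s : ℝ) :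
    axialMonomial e a b x ^ s = axialMonomial e (a * s) (b * s) x := by
  have hT : 0 < ⟪e, x⟫_ℝ := hx
  simp only [axialMonomial]
  rw [mul_rpow (by positivity) (by positivity), rpow_mul hT.le, rpow_mul (norm_nonneg x)]

lemma axialMonomial_smul (hx : x ∈ openHalfSpace e) {l : ℝ} (hl : 0 < l) :
    axialMonomial e a b (l • x) = l ^ (a + b) * axialMonomial e a b x := by
  have hT : 0 < ⟪e, x⟫_ℝ := hx
  simp only [axialMonomial, inner_smul_right, norm_smul, norm_of_nonneg hl.le,
    mul_rpow hl.le hT.le, mul_rpow hl.le (norm_nonneg x), rpow_add hl]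
  ring

lemma axialMonomial_two_neg_two (e x : E) :
    axialMonomial e 2 (-2) x = ⟪e, x⟫_ℝ ^ 2 / ‖x‖ ^ 2 := by
  simp [axialMonomial, div_eq_mul_inv]

lemma one_sub_axialMonomial_mem_Ico (he : ‖e‖ = 1) (hx : x ∈ openHalfSpace e) :
    1 - axialMonomial e 2 (-2) x ∈ Ico (0 : ℝ) 1 := by
  have hT : 0 < ⟪e, x⟫_ℝ := hx
  have hle : ⟪e, x⟫_ℝ ≤ ‖x‖ := by simpa [he] using real_inner_le_norm e x
  refine ⟨?_, sub_lt_self _ (axialMonomial_pos _ _ hx)⟩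
  rw [axialMonomial_two_neg_two, sub_nonneg]
  exact div_le_one_of_le₀ (by gcongr) (sq_nonneg _)

lemma contDiffOn_axialMonomial (e : E) : ContDiffOn ℝ ω (axialMonomial e a b) (openHalfSpace e) :=
  fun _ hx ↦ ((contDiffAt_inner_rpow a (ne_of_gt hx)).mul (contDiffAt_norm_rpow b
    (norm_pos_iff.mp (norm_pos_of_mem_openHalfSpace hx)))).contDiffWithinAt

lemma hasGradientAt_axialMonomial [CompleteSpace E] (hx : x ∈ openHalfSpace e) :
    HasGradientAt (axialMonomial e a b)
      (axialMonomial e a b x • ((a / ⟪e, x⟫_ℝ) • e + (b / ‖x‖ ^ 2) • x)) x := by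
  have hT : 0 < ⟪e, x⟫_ℝ := hx
  have hN := norm_pos_of_mem_openHalfSpace hx
  convert! hasGradientAt_mul (hasGradientAt_inner_rpow a hT.ne')
    (hasGradientAt_norm_rpow b (norm_pos_iff.mp hN)) using 1
  simp only [axialMonomial, rpow_sub hT, rpow_sub hN, rpow_one, rpow_two, smul_smul,
    smul_add]
  rw [add_comm]
  congr 2 <;> ring

lemma inner_gradient_axialMonomial [CompleteSpace E] (he : ‖e‖ = 1) (hx : x ∈ openHalfSpace e)
    (a' b' : ℝ) :
    ⟪∇ (axialMonomial e a b) x, ∇ (axialMonomial e a' b') x⟫_ℝ =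
      axialMonomial e a b x * axialMonomial e a' b' x *
        (a * a' / ⟪e, x⟫_ℝ ^ 2 + (a * b' + b * a' + b * b') / ‖x‖ ^ 2) := by
  have hT : ⟪e, x⟫_ℝ ≠ 0 := ne_of_gt hx
  have hN := (norm_pos_of_mem_openHalfSpace hx).ne'
  rw [(hasGradientAt_axialMonomial a b hx).gradient,
    (hasGradientAt_axialMonomial a' b' hx).gradient]
  simp only [inner_add_left, inner_add_right, real_inner_smul_left, real_inner_smul_right,
    real_inner_self_eq_norm_sq, he, real_inner_comm e x]
  field_simp
  ring

variable [FiniteDimensional ℝ E]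

lemma laplacian_axialMonomial (he : ‖e‖ = 1) (hx : x ∈ openHalfSpace e) :
    Δ (axialMonomial e a b) x = axialMonomial e a b x *
      (a * (a - 1) / ⟪e, x⟫_ℝ ^ 2 + b * (2 * a + b + finrank ℝ E - 2) / ‖x‖ ^ 2) := by
  have hT : 0 < ⟪e, x⟫_ℝ := hx
  have hN := norm_pos_of_mem_openHalfSpace hx
  have hx0 := norm_pos_iff.mp hN
  change Δ (fun y ↦ ⟪e, y⟫_ℝ ^ a * ‖y‖ ^ b) x = _
  rw [laplacian_mul (contDiffAt_inner_rpow a hT.ne') (contDiffAt_norm_rpow b hx0),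
    laplacian_inner_rpow a hT.ne', laplacian_norm_rpow b hx0,
    (hasGradientAt_inner_rpow a hT.ne').gradient, (hasGradientAt_norm_rpow b hx0).gradient]
  simp only [axialMonomial, real_inner_smul_left, real_inner_smul_right, he, rpow_sub hT,
    rpow_sub hN, rpow_one, rpow_two]
  field_simp
  ring

lemma laplacian_axialMonomial_mul_comp (he : ‖e‖ = 1) (hx : x ∈ openHalfSpace e) {φ : ℝ → ℝ}
    (hφ : ContDiffAt ℝ 2 φ (axialMonomial e 2 (-2) x)) :
    letI n : ℝ := finrank ℝ E
    letI r := axialMonomial e 2 (-2) x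
    Δ (fun y ↦ axialMonomial e a b y * φ (axialMonomial e 2 (-2) y)) x =
      axialMonomial e a b x * (a * (a - 1) / ⟪e, x⟫_ℝ ^ 2 * φ r +
        (4 * r * (1 - r) * deriv (deriv φ) r + (4 * a * (1 - r) + 2 - 2 * n * r) * deriv φ r +
          b * (2 * a + b + n - 2) * φ r) / ‖x‖ ^ 2) := by
  have hT : ⟪e, x⟫_ℝ ≠ 0 := ne_of_gt hx
  have hN := (norm_pos_of_mem_openHalfSpace hx).ne'
  have hsmooth (a b : ℝ) : ContDiffAt ℝ 2 (axialMonomial e a b) x :=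
    ((contDiffOn_axialMonomial a b e).contDiffAt
      ((isOpen_openHalfSpace e).mem_nhds hx)).of_le le_top
  have hcomp : ContDiffAt ℝ 2 (fun y ↦ φ (axialMonomial e 2 (-2) y)) x :=
    hφ.comp x (hsmooth 2 (-2))
  have hgrad := hasGradientAt_comp (hφ.differentiableAt two_ne_zero).hasDerivAt
    ((hsmooth 2 (-2)).differentiableAt two_ne_zero).hasGradientAt
  rw [laplacian_mul (hsmooth a b) hcomp, laplacian_comp hφ (hsmooth 2 (-2)),
    hgrad.gradient, ← real_inner_self_eq_norm_sq, real_inner_smul_right]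
  simp only [inner_gradient_axialMonomial _ _ he hx, laplacian_axialMonomial _ _ he hx,
    axialMonomial_two_neg_two]
  field_simp
  ring

end AxialMonomial

/-- The solution of `Δ H = α (α - 1) x₁⁻² H`, homogeneous of degree `γ`, that is obtained by
separating variables: up to the factor `x₁ ^ α * |x| ^ (γ - α)` it is a function of
`1 - x₁² / |x|²`, and as such it solves the hypergeometric equation. -/
noncomputable def axialSolution {E : Type*} [NormedAddCommGroup E] [InnerProductSpace ℝ E]
    (e : E) (α γ : ℝ) (x : E) : ℝ :=
  axialMonomial e α (γ - α) x *
    ₂F₁ ((α - γ) / 2) ((α + γ + finrank ℝ E - 2) / 2) ((finrank ℝ E - 1) / 2 : ℝ)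
      (1 - axialMonomial e 2 (-2) x)

section AxialSolution

variable {E : Type*} [NormedAddCommGroup E] [InnerProductSpace ℝ E] {e x : E} {α γ : ℝ}

lemma axialSolution_congr {y : E} (hinner : ⟪e, x⟫_ℝ = ⟪e, y⟫_ℝ) (hnorm : ‖x‖ = ‖y‖) :
    axialSolution e α γ x = axialSolution e α γ y := by
  simp only [axialSolution, axialMonomial, hinner, hnorm]

lemma axialSolution_smul (hx : x ∈ openHalfSpace e) {l : ℝ} (hl : 0 < l) :
    axialSolution e α γ (l • x) = l ^ γ * axialSolution e α γ x := by
  simp only [axialSolution, axialMonomial_smul _ _ hx hl, add_sub_cancel, add_neg_cancel,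
    rpow_zero, one_mul, mul_assoc]

lemma contDiffOn_axialSolution (he : ‖e‖ = 1) :
    ContDiffOn ℝ ω (axialSolution e α γ) (openHalfSpace e) := by
  refine (contDiffOn_axialMonomial _ _ e).mul
    ((analyticOnNhd_ordinaryHypergeometric _ _ _).contDiffOn Metric.isOpen_ball.uniqueDiffOn |>.comp
      (contDiffOn_const.sub (contDiffOn_axialMonomial _ _ e)) fun x hx ↦ ?_)
  obtain ⟨hs0, hs1⟩ := one_sub_axialMonomial_mem_Ico he hx
  rwa [mem_ball_zero_iff, norm_of_nonneg hs0]

theorem laplacian_axialSolution [FiniteDimensional ℝ E] (hdim : 2 ≤ finrank ℝ E) (he : ‖e‖ = 1)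
    (hx : x ∈ openHalfSpace e) :
    Δ (axialSolution e α γ) x = α * (α - 1) / ⟪e, x⟫_ℝ ^ 2 * axialSolution e α γ x := by
  have hdim' : (2 : ℝ) ≤ finrank ℝ E := by exact_mod_cast hdim
  obtain ⟨hs0, hs1⟩ := one_sub_axialMonomial_mem_Ico he hx
  have hs : ‖1 - axialMonomial e 2 (-2) x‖ < 1 := by rwa [norm_of_nonneg hs0]
  let F : ℝ → ℝ := ₂F₁ ((α - γ) / 2) ((α + γ + finrank ℝ E - 2) / 2) ((finrank ℝ E - 1) / 2 : ℝ)
  have hF : ContDiffAt ℝ 2 F (1 - axialMonomial e 2 (-2) x) :=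
    (analyticOnNhd_ordinaryHypergeometric _ _ _ _ (mem_ball_zero_iff.mpr hs)).contDiffAt
  have ode := ordinaryHypergeometric_ode (a := (α - γ) / 2) (b := (α + γ + finrank ℝ E - 2) / 2)
    (c := (finrank ℝ E - 1) / 2) (fun k ↦ by
      have : (0 : ℝ) ≤ k := k.cast_nonneg
      linarith) hs
  have hderiv : deriv (fun r ↦ F (1 - r)) = fun r ↦ -deriv F (1 - r) :=
    funext fun r ↦ deriv_comp_const_sub ..
  change Δ (fun y ↦ axialMonomial e α (γ - α) y * F (1 - axialMonomial e 2 (-2) y)) x =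
    _ * (_ * F (1 - axialMonomial e 2 (-2) x))
  rw [laplacian_axialMonomial_mul_comp (φ := fun r ↦ F (1 - r)) _ _ he hx
    (hF.comp _ (contDiffAt_const.sub contDiffAt_id)), hderiv, deriv.fun_neg, deriv_comp_const_sub]
  linear_combination 4 * axialMonomial e α (γ - α) x / ‖x‖ ^ 2 * ode

theorem exists_axialSolution_bounds (hdim : 2 ≤ finrank ℝ E) (he : ‖e‖ = 1) (hα : 1 / 2 < α)
    (hγ : γ ∈ Ioo (-((finrank ℝ E : ℝ) - 2 + α)) α) :
    ∃ c > 0, ∀ x ∈ openHalfSpace e,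
      c⁻¹ * axialMonomial e (1 - α) (γ - (1 - α)) x ≤ axialSolution e α γ x ∧
        axialSolution e α γ x ≤ c * axialMonomial e (1 - α) (γ - (1 - α)) x := by
  have hdim' : (2 : ℝ) ≤ finrank ℝ E := by exact_mod_cast hdim
  obtain ⟨c, hc, hbounds⟩ := exists_ordinaryHypergeometric_bounds
    (a := (α - γ) / 2) (b := (α + γ + finrank ℝ E - 2) / 2) (c := (finrank ℝ E - 1) / 2)
    (by linarith [hγ.2]) (by linarith [hγ.1]) (by linarith) (by linarith)
  refine ⟨c, hc, fun x hx ↦ ?_⟩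
  have hfactor : axialMonomial e (1 - α) (γ - (1 - α)) x =
      axialMonomial e α (γ - α) x * axialMonomial e 2 (-2) x ^ (1 / 2 - α) := by
    rw [axialMonomial_rpow _ _ hx, axialMonomial_mul _ _ hx]
    ring_nf
  have hexponent : ((finrank ℝ E - 1) / 2 - (α - γ) / 2 - (α + γ + finrank ℝ E - 2) / 2 : ℝ) =
      1 / 2 - α := by ring
  obtain ⟨lower, upper⟩ := hbounds _ (one_sub_axialMonomial_mem_Ico he hx)
  rw [hexponent, sub_sub_cancel] at lower upper
  have hpos := (axialMonomial_pos α (γ - α) hx).le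
  rw [hfactor, axialSolution, mul_left_comm, mul_left_comm c]
  exact ⟨mul_le_mul_of_nonneg_left lower hpos, mul_le_mul_of_nonneg_left upper hpos⟩

end AxialSolution

lemma half_lt_aPlus {μ : ℝ} (hμ : μ < 1 / 4) : 1 / 2 < aPlus μ :=
  lt_add_of_pos_right _ (sqrt_pos.mpr (sub_pos.mpr hμ))

lemma aPlus_mul_aPlus_sub_one {μ : ℝ} (hμ : μ ≤ 1 / 4) : aPlus μ * (aPlus μ - 1) = -μ := by
  have := sq_sqrt (sub_nonneg.mpr hμ)
  unfold aPlus
  linear_combination this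

lemma one_sub_aPlus (μ : ℝ) : 1 - aPlus μ = aMinus μ := by
  unfold aPlus aMinus
  ring

lemma lap_eq_laplacian {n : ℕ} : lap (n := n) = Δ := by
  ext u x
  simp [lap, laplacian_eq_iteratedFDeriv_orthonormalBasis u (EuclideanSpace.basisFun (Fin n) ℝ)]

lemma x1_eq_inner {n : ℕ} (hn : 0 < n) (x : EuclideanSpace ℝ (Fin n)) :
    x1 x = ⟪EuclideanSpace.single ⟨0, hn⟩ 1, x⟫_ℝ := by
  simp [x1, hn, EuclideanSpace.inner_single_left]

lemma halfSpace_eq_openHalfSpace {n : ℕ} (hn : 0 < n) :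
    halfSpace n = openHalfSpace (EuclideanSpace.single ⟨0, hn⟩ 1) :=
  Set.ext fun x ↦ by simp only [halfSpace, openHalfSpace, mem_ofPred_eq, x1_eq_inner hn]

theorem stmt0_general {E : Type*} [NormedAddCommGroup E] [InnerProductSpace ℝ E]
    [FiniteDimensional ℝ E] (hdim : 2 ≤ finrank ℝ E) {e : E} (he : ‖e‖ = 1) (μ γ : ℝ)
    (hμ : μ < 1 / 4) (hγ : γ ∈ Ioo (-((finrank ℝ E : ℝ) - 2 + aPlus μ)) (aPlus μ)) :
    ∃ c > (0 : ℝ), ∃ H : E → ℝ,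
      ContDiffOn ℝ ω H (openHalfSpace e) ∧
      (∀ x ∈ openHalfSpace e, 0 < H x) ∧
      (∀ x ∈ openHalfSpace e, Δ H x + μ / ⟪e, x⟫_ℝ ^ 2 * H x = 0) ∧
      (∀ x ∈ openHalfSpace e, ∀ y ∈ openHalfSpace e,
        ⟪e, x⟫_ℝ = ⟪e, y⟫_ℝ → ‖x‖ = ‖y‖ → H x = H y) ∧
      (∀ l : ℝ, 0 < l → ∀ x ∈ openHalfSpace e, H (l • x) = l ^ γ * H x) ∧
      (∀ x ∈ openHalfSpace e,
        c⁻¹ * ⟪e, x⟫_ℝ ^ aMinus μ * ‖x‖ ^ (γ - aMinus μ) ≤ H x ∧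
        H x ≤ c * ⟪e, x⟫_ℝ ^ aMinus μ * ‖x‖ ^ (γ - aMinus μ)) := by
  obtain ⟨c, hc, hbounds⟩ := exists_axialSolution_bounds hdim he (half_lt_aPlus hμ) hγ
  refine ⟨c, hc, axialSolution e (aPlus μ) γ, contDiffOn_axialSolution he, fun x hx ↦ ?_,
    fun x hx ↦ ?_, fun _ _ _ _ ↦ axialSolution_congr, fun _ hl _ hx ↦ axialSolution_smul hx hl, ?_⟩
  · exact (mul_pos (inv_pos.mpr hc) (axialMonomial_pos _ _ hx)).trans_le (hbounds x hx).1
  · rw [laplacian_axialSolution hdim he hx, aPlus_mul_aPlus_sub_one hμ.le]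
    ring
  · simpa only [axialMonomial, mul_assoc, one_sub_aPlus] using hbounds

/-- existence of a positive, axially symmetric, `γ`-homogeneous
`L_μ`-harmonic `H_γ` on the half-space with two-sided bound
`c⁻¹ x₁^{α₋} |x|^{γ−α₋} ≤ H_γ ≤ c x₁^{α₋} |x|^{γ−α₋}`. -/
theorem stmt0 (n : ℕ) (hn : 2 ≤ n) (μ γ : ℝ) (hμ : μ < 1 / 4)
    (hγ : γ ∈ Set.Ioo (-((n : ℝ) - 2 + aPlus μ)) (aPlus μ)) :
    ∃ c > (0 : ℝ), ∃ H : EuclideanSpace ℝ (Fin n) → ℝ,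
      ContDiffOn ℝ 2 H (halfSpace n) ∧
      (∀ x ∈ halfSpace n, 0 < H x) ∧
      (∀ x ∈ halfSpace n, lap H x + (μ / (x1 x) ^ 2) * H x = 0) ∧
      (∀ x ∈ halfSpace n, ∀ y ∈ halfSpace n, x1 x = x1 y → ‖x‖ = ‖y‖ → H x = H y) ∧
      (∀ l : ℝ, 0 < l → ∀ x ∈ halfSpace n, H (l • x) = l ^ γ * H x) ∧
      (∀ x ∈ halfSpace n,
        c⁻¹ * x1 x ^ aMinus μ * ‖x‖ ^ (γ - aMinus μ) ≤ H x ∧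
        H x ≤ c * x1 x ^ aMinus μ * ‖x‖ ^ (γ - aMinus μ)) := by
  have hn0 : 0 < n := by lia
  obtain ⟨c, hc, H, hsmooth, hH⟩ := stmt0_general (E := EuclideanSpace ℝ (Fin n))
    (e := EuclideanSpace.single ⟨0, hn0⟩ 1)
    (by simpa using hn) (by simp) μ γ hμ (by simpa using hγ)
  simp only [lap_eq_laplacian, x1_eq_inner hn0, halfSpace_eq_openHalfSpace hn0]
  exact ⟨c, hc, H, hsmooth.of_le le_top, hH⟩
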